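/- Let Γ be an infinite additive abelian group which is not torsion-free (Γ contains a nonzero element of finite additive order). Let T be a finite tree of diameter 5 with central vertices v_{c1} and v_{c2} (the two adjacent vertices each satisfying dist(v_{ci}, u) ≤ 3 for every vertex u), and suppose v_{c1} is a support vertex and v_{c2} is not a support vertex. Then T is Γ-vertex magic if and only if both of the following hold: (i) no vertex adjacent to v_{c1} is a weak support vertex; (ii) there exists g ∈ Γ, g ≠ 0, with ((deg(v_{c2}) : ℤ) − 1) • g = 0. -/

import Mathlib

/-!
The weight of a pendant vertex is the label of its neighbour, so every support vertex carries the
magic constant `μ`. Conversely, once the non-pendant vertices are labelled, the pendant vertices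
at a support vertex can be used to correct its weight, each support vertex being handled
independently; this fails only if there is one pendant vertex and it would have to be labelled `0`.

Suppose `c` is the only vertex that is neither pendant nor a support vertex. Then the label of `c`
is the only freedom besides `μ`: the weight of `c` gives `deg c • μ = μ`, and a suitable label of
`c` avoids the bad event at the weak support vertices adjacent to `c`. At any other weak support
vertex `v`, the single pendant label is `2 • μ - deg v • μ`, which must not vanish.

In the trees at hand `vc₂` is such a vertex `c`, and every non-pendant vertex is a centre or
adjacent to one. A weak support vertex not adjacent to `vc₂` is thus adjacent to `vc₁`; all its
other neighbours are pendant, so its degree is `2` and it obstructs every labelling.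
-/

namespace VertexMagic

open Finset SimpleGraph

section Graph

variable {V Γ : Type*} (G : SimpleGraph V) [G.LocallyFinite]

/-- A support vertex: one with a neighbour of degree 1. -/
def IsSupport (v : V) : Prop :=
  ∃ u, G.Adj v u ∧ G.degree u = 1

/-- A weak support vertex: one with exactly one neighbour of degree 1. -/
def IsWeakSupport (v : V) : Prop :=
  ∃! u, G.Adj v u ∧ G.degree u = 1

/-- A vertex magic labelling with magic constant `μ`: all labels are nonzero and the labels around
every vertex add up to `μ`. -/
def IsMagicLabeling [AddCommMonoid Γ] (ℓ : V → Γ) (μ : Γ) : Prop :=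
  (∀ v, ℓ v ≠ 0) ∧ ∀ v, ∑ u ∈ G.neighborFinset v, ℓ u = μ

/-- The pendant vertices adjacent to `v`. -/
def pendantNeighbors (v : V) : Finset V :=
  {u ∈ G.neighborFinset v | G.degree u = 1}

/-- The non-pendant vertices adjacent to `v`. -/
def innerNeighbors (v : V) : Finset V :=
  {u ∈ G.neighborFinset v | G.degree u ≠ 1}

variable {G} {c v : V}

lemma mem_pendantNeighbors {u : V} :
    u ∈ pendantNeighbors G v ↔ G.Adj v u ∧ G.degree u = 1 := by
  simp only [pendantNeighbors, mem_filter, mem_neighborFinset]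

lemma mem_innerNeighbors {u : V} :
    u ∈ innerNeighbors G v ↔ G.Adj v u ∧ G.degree u ≠ 1 := by
  simp only [innerNeighbors, mem_filter, mem_neighborFinset]

lemma isSupport_iff_pendantNeighbors_nonempty :
    IsSupport G v ↔ (pendantNeighbors G v).Nonempty := by
  simp only [IsSupport, Finset.Nonempty, mem_pendantNeighbors]

lemma isWeakSupport_iff_card_pendantNeighbors :
    IsWeakSupport G v ↔ #(pendantNeighbors G v) = 1 := by
  simp only [IsWeakSupport, card_eq_one_iff_existsUnique, mem_pendantNeighbors]

lemma IsWeakSupport.isSupport (hv : IsWeakSupport G v) : IsSupport G v :=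
  hv.exists

lemma IsWeakSupport.card_innerNeighbors_add_one (hv : IsWeakSupport G v) :
    #(innerNeighbors G v) + 1 = G.degree v := by
  rw [← isWeakSupport_iff_card_pendantNeighbors.1 hv, add_comm, ← card_neighborFinset_eq_degree]
  exact card_filter_add_card_filter_not _

section Monoid

variable [AddCommMonoid Γ]

lemma sum_pendantNeighbors_add_sum_innerNeighbors (ℓ : V → Γ) (v : V) :
    ∑ u ∈ pendantNeighbors G v, ℓ u + ∑ u ∈ innerNeighbors G v, ℓ u =
      ∑ u ∈ G.neighborFinset v, ℓ u :=
  sum_filter_add_sum_filter_not _ _ _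

lemma sum_neighborFinset_of_degree_eq_one (ℓ : V → Γ) {u : V}
    (hu : G.degree u = 1) (h : G.Adj u v) : ∑ x ∈ G.neighborFinset u, ℓ x = ℓ v := by
  obtain ⟨w, hw⟩ := card_eq_one.1 hu
  obtain rfl : v = w := by simpa only [hw, mem_singleton] using (mem_neighborFinset G u v).2 h
  rw [hw, sum_singleton]

namespace IsMagicLabeling

variable {ℓ : V → Γ} {μ : Γ}

lemma apply_eq_of_isSupport (h : IsMagicLabeling G ℓ μ) (hv : IsSupport G v) : ℓ v = μ := by
  obtain ⟨u, hvu, hu⟩ := hv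
  rw [← h.2 u, sum_neighborFinset_of_degree_eq_one ℓ hu hvu.symm]

lemma ne_zero_of_isSupport (h : IsMagicLabeling G ℓ μ) (hv : IsSupport G v) : μ ≠ 0 :=
  h.apply_eq_of_isSupport hv ▸ h.1 v

lemma degree_nsmul_eq (h : IsMagicLabeling G ℓ μ) (hc : ∀ u, G.Adj c u → IsSupport G u) :
    G.degree c • μ = μ := by
  have hsum : ∑ u ∈ G.neighborFinset c, ℓ u = G.degree c • μ :=
    sum_eq_card_nsmul fun u hu => h.apply_eq_of_isSupport (hc u ((mem_neighborFinset ..).1 hu))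
  rw [← hsum, h.2]

end IsMagicLabeling

lemma isMagicLabeling_of_forall_isSupport (hcs : ¬ IsSupport G c)
    (hs : ∀ v, G.degree v ≠ 1 → v ≠ c → IsSupport G v) {ℓ : V → Γ} {g : Γ}
    (hℓ₀ : ∀ v, ℓ v ≠ 0) (hℓ : ∀ v, G.degree v ≠ 1 → v ≠ c → ℓ v = g)
    (hcg : G.degree c • g = g) (hweight : ∀ v, IsSupport G v → ∑ u ∈ G.neighborFinset v, ℓ u = g) :
    IsMagicLabeling G ℓ g := by
  refine ⟨hℓ₀, fun v => ?_⟩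
  by_cases hv : IsSupport G v
  · exact hweight v hv
  have hinner {u : V} (hu : G.Adj v u) : G.degree u ≠ 1 := fun h => hv ⟨u, hu, h⟩
  by_cases hvc : v = c
  · subst hvc
    rw [← hcg]
    exact sum_eq_card_nsmul fun u hu =>
      have hvu := (mem_neighborFinset ..).1 hu
      hℓ u (hinner hvu) hvu.ne'
  · have hpendant : G.degree v = 1 := by_contra fun h => hv (hs v h hvc)
    obtain ⟨p, hp, -⟩ := degree_eq_one_iff_existsUnique_adj.1 hpendant
    have hpc : p ≠ c := fun h => hcs ⟨v, h ▸ hp.symm, hpendant⟩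
    rw [sum_neighborFinset_of_degree_eq_one ℓ hpendant hp, hℓ p (hinner hp) hpc]

lemma IsWeakSupport.sum_innerNeighbors_add_ite [DecidableEq V] [DecidableRel G.Adj]
    (hv : IsWeakSupport G v) (hc : G.degree c ≠ 1) (g x : Γ) :
    ∑ u ∈ innerNeighbors G v, (g + if u = c then x else 0) + g =
      G.degree v • g + if G.Adj c v then x else 0 := by
  simp only [sum_add_distrib, sum_const, sum_ite_eq', mem_innerNeighbors, hc, ne_eq,
    not_false_eq_true, and_true, G.adj_comm v c, ← hv.card_innerNeighbors_add_one, succ_nsmul]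
  abel

end Monoid

lemma IsMagicLabeling.degree_nsmul_ne_two_nsmul [AddCancelCommMonoid Γ] {ℓ : V → Γ} {μ : Γ}
    (h : IsMagicLabeling G ℓ μ) (hv : IsWeakSupport G v)
    (hinner : ∀ u ∈ innerNeighbors G v, IsSupport G u) : G.degree v • μ ≠ 2 • μ := by
  obtain ⟨u, hu⟩ := card_eq_one.1 (isWeakSupport_iff_card_pendantNeighbors.1 hv)
  have hweight : ℓ u + #(innerNeighbors G v) • μ = μ := by
    rw [← sum_singleton ℓ u, ← hu,
      ← sum_eq_card_nsmul fun w hw => h.apply_eq_of_isSupport (hinner w hw),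
      sum_pendantNeighbors_add_sum_innerNeighbors, h.2]
  rw [← hv.card_innerNeighbors_add_one, succ_nsmul, two_nsmul, Ne, add_left_inj]
  intro hμ
  exact h.1 u (by simpa only [hμ, add_eq_right] using hweight)

section Group

variable [AddCommGroup Γ]

lemma exists_forall_ne_zero_sum_eq {ι : Type*} (hΓ : 2 < ENat.card Γ) {s : Finset ι}
    (hs : s.Nonempty) (t : Γ) (ht : #s = 1 → t ≠ 0) :
    ∃ f : ι → Γ, (∀ i, f i ≠ 0) ∧ ∑ i ∈ s, f i = t := by
  classical
  induction hs using Finset.Nonempty.cons_induction generalizing t with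
  | singleton a => exact ⟨fun _ => t, fun _ => ht (card_singleton a), sum_singleton _ a⟩
  | cons a s ha _ ih =>
    obtain ⟨y, hy⟩ := exists_not_mem_of_card_lt_enatCard (s := ({0, t} : Finset Γ))
      (lt_of_le_of_lt (mod_cast card_le_two) hΓ)
    simp only [mem_insert, mem_singleton, not_or] at hy
    obtain ⟨f, hf, hsum⟩ := ih (t - y) fun _ => sub_ne_zero.2 (Ne.symm hy.2)
    refine ⟨Function.update f a y, fun i => ?_, ?_⟩
    · obtain rfl | hi := eq_or_ne i a
      · simpa only [Function.update_self] using hy.1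
      · simpa only [Function.update_of_ne hi] using hf i
    · rw [sum_cons, Function.update_self, sum_update_of_notMem ha, hsum, add_sub_cancel]

lemma exists_extension_forall_isSupport_sum_eq (hΓ : 2 < ENat.card Γ) (b μ : V → Γ)
    (hb : ∀ v, b v ≠ 0) (hμ : ∀ v, IsWeakSupport G v → ∑ u ∈ innerNeighbors G v, b u ≠ μ v) :
    ∃ ℓ : V → Γ, (∀ v, ℓ v ≠ 0) ∧ (∀ v, G.degree v ≠ 1 → ℓ v = b v) ∧
      ∀ v, IsSupport G v → ∑ u ∈ G.neighborFinset v, ℓ u = μ v := by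
  have hlocal (v : V) : ∃ f : V → Γ, (∀ u, f u ≠ 0) ∧ (IsSupport G v →
      ∑ u ∈ pendantNeighbors G v, f u = μ v - ∑ u ∈ innerNeighbors G v, b u) := by
    by_cases hv : IsSupport G v
    · obtain ⟨f, hf, hsum⟩ := exists_forall_ne_zero_sum_eq hΓ
        (isSupport_iff_pendantNeighbors_nonempty.1 hv) (μ v - ∑ u ∈ innerNeighbors G v, b u)
        fun hcard => sub_ne_zero.2 (hμ v (isWeakSupport_iff_card_pendantNeighbors.2 hcard)).symm
      exact ⟨f, hf, fun _ => hsum⟩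
    · exact ⟨b, hb, fun h => absurd h hv⟩
  choose f hf hsum using hlocal
  choose parent _ hparent using fun u (hu : G.degree u = 1) =>
    degree_eq_one_iff_existsUnique_adj.1 hu
  let ℓ : V → Γ := fun u => if hu : G.degree u = 1 then f (parent u hu) u else b u
  have hinner {u : V} (hu : G.degree u ≠ 1) : ℓ u = b u := dif_neg hu
  have hpendant {u v : V} (hvu : u ∈ pendantNeighbors G v) : ℓ u = f v u := by
    obtain ⟨hadj, hu⟩ := mem_pendantNeighbors.1 hvu
    rw [hparent u hu v hadj.symm]
    exact dif_pos hu
  refine ⟨ℓ, fun u => ?_, fun u => hinner, fun v hv => ?_⟩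
  · by_cases hu : G.degree u = 1
    · simpa only [ℓ, dif_pos hu] using hf _ u
    · simpa only [hinner hu] using hb u
  · rw [← sum_pendantNeighbors_add_sum_innerNeighbors, sum_congr rfl fun u hu => hpendant hu,
      sum_congr rfl fun u hu => hinner (mem_innerNeighbors.1 hu).2, hsum v hv, sub_add_cancel]

/-- The inner label at `c` is `g + x`; the bound on `Γ` leaves room to choose `x` so that neither it
nor the pendant label at a weak support vertex adjacent to `c` vanishes. -/
lemma exists_isMagicLabeling (hc : 1 < G.degree c) (hcs : ¬ IsSupport G c)
    (hs : ∀ v, G.degree v ≠ 1 → v ≠ c → IsSupport G v)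
    (hΓ : G.degree c + 1 < ENat.card Γ) {g : Γ} (hg : g ≠ 0) (hcg : G.degree c • g = g)
    (hweak : ∀ v, IsWeakSupport G v → ¬ G.Adj c v → G.degree v • g ≠ 2 • g) :
    ∃ ℓ : V → Γ, IsMagicLabeling G ℓ g := by
  classical
  obtain ⟨x, hx⟩ := exists_not_mem_of_card_lt_enatCard
    (s := insert (-g) ((G.neighborFinset c).image fun v => (2 : ℕ) • g - G.degree v • g)) <|
    lt_of_le_of_lt (mod_cast (card_insert_le _ _).trans (Nat.succ_le_succ card_image_le)) hΓ
  simp only [mem_insert, mem_image, mem_neighborFinset, not_or, not_exists, not_and] at hx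
  obtain ⟨hxg, hx⟩ := hx
  let b : V → Γ := fun u => g + if u = c then x else 0
  have hb {u : V} (hu : u ≠ c) : b u = g := by simp only [b, if_neg hu, add_zero]
  have hb₀ (u : V) : b u ≠ 0 := by
    by_cases hu : u = c
    · simpa only [b, if_pos hu, Ne, add_comm g x, add_eq_zero_iff_eq_neg] using hxg
    · simpa only [hb hu] using hg
  have hresidual (v : V) (hv : IsWeakSupport G v) : ∑ u ∈ innerNeighbors G v, b u ≠ g := by
    rw [← add_left_injective g |>.ne_iff, hv.sum_innerNeighbors_add_ite hc.ne', ← two_nsmul]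
    split_ifs with hcv
    · exact fun h => hx v hcv (sub_eq_of_eq_add' h.symm)
    · simpa only [add_zero] using hweak v hv hcv
  have hΓ₂ : 2 < ENat.card Γ := lt_of_le_of_lt (mod_cast Nat.succ_le_succ hc.le) hΓ
  obtain ⟨ℓ, hℓ₀, hℓ, hweight⟩ :=
    exists_extension_forall_isSupport_sum_eq hΓ₂ b (fun _ => g) hb₀ hresidual
  exact ⟨ℓ, isMagicLabeling_of_forall_isSupport hcs hs hℓ₀
    (fun v hv hvc => (hℓ v hv).trans (hb hvc)) hcg hweight⟩

theorem exists_isMagicLabeling_iff (hc : 1 < G.degree c) (hcs : ¬ IsSupport G c)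
    (hs : ∀ v, G.degree v ≠ 1 → v ≠ c → IsSupport G v) (hΓ : G.degree c + 1 < ENat.card Γ) :
    (∃ (ℓ : V → Γ) (μ : Γ), IsMagicLabeling G ℓ μ) ↔
      ∃ g : Γ, g ≠ 0 ∧ G.degree c • g = g ∧
        ∀ v, IsWeakSupport G v → ¬ G.Adj c v → G.degree v • g ≠ 2 • g := by
  constructor
  · rintro ⟨ℓ, μ, h⟩
    have hadj (u : V) (hu : G.Adj c u) : IsSupport G u :=
      hs u (fun hdeg => hcs ⟨u, hu, hdeg⟩) hu.ne'
    obtain ⟨u, hu⟩ := (G.degree_pos_iff_exists_adj c).1 (zero_lt_one.trans hc)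
    refine ⟨μ, h.ne_zero_of_isSupport (hadj u hu), h.degree_nsmul_eq hadj, fun v hv hcv => ?_⟩
    refine h.degree_nsmul_ne_two_nsmul hv fun w hw => ?_
    obtain ⟨hvw, hw⟩ := mem_innerNeighbors.1 hw
    exact hs w hw fun hwc => hcv (hwc ▸ hvw.symm)
  · rintro ⟨g, hg, hcg, hweak⟩
    obtain ⟨ℓ, h⟩ := exists_isMagicLabeling hc hcs hs hΓ hg hcg hweak
    exact ⟨ℓ, g, h⟩

end Group

end Graph

section Tree

variable {V : Type*} {T : SimpleGraph V} {r c c₁ c₂ v y : V}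

lemma exists_adj_dist_eq_dist_add_one (hT : T.Connected) (h : v ≠ r) :
    ∃ p, T.Adj v p ∧ T.dist r v = T.dist r p + 1 := by
  obtain ⟨w, hw⟩ := hT.exists_walk_length_eq_dist v r
  cases w with
  | nil => exact absurd rfl h
  | @cons _ p _ hvp q =>
    refine ⟨p, hvp, ?_⟩
    have hq : T.dist p r ≤ q.length := dist_le q
    have htri := hT.dist_triangle (u := v) (v := p) (w := r)
    rw [dist_eq_one_iff_adj.2 hvp] at htri
    rw [Walk.length_cons] at hw
    rw [dist_comm, dist_comm (u := r)]
    omega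

/-- Geodesics to the root through two such neighbours are paths, which coincide in a tree. -/
lemma eq_of_adj_of_dist_eq_dist_add_one (hT : T.IsTree) {p q : V} (hp : T.Adj v p) (hq : T.Adj v q)
    (hdp : T.dist r v = T.dist r p + 1) (hdq : T.dist r v = T.dist r q + 1) : p = q := by
  have hpath {p : V} (hp : T.Adj v p) (hdp : T.dist r v = T.dist r p + 1) :
      ∃ w : T.Walk p r, (Walk.cons hp w).IsPath := by
    obtain ⟨w, hw⟩ := hT.connected.exists_walk_length_eq_dist p r
    refine ⟨w, Walk.isPath_of_length_eq_dist _ ?_⟩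
    rw [Walk.length_cons, hw, dist_comm, ← hdp, dist_comm]
  obtain ⟨w, hw⟩ := hpath hp hdp
  obtain ⟨w', hw'⟩ := hpath hq hdq
  simpa only [Walk.snd_cons] using congrArg Walk.snd ((hT.existsUnique_path v r).unique hw hw')

lemma dist_eq_dist_add_one_of_adj_of_adj (hT : T.IsTree) (hcy : T.Adj c y) (hyv : T.Adj y v)
    (hvc : v ≠ c) (h : T.dist r y = T.dist r c + 1) : T.dist r v = T.dist r y + 1 :=
  (hT.dist_eq_dist_add_one_of_adj r hyv).resolve_left fun hv =>
    hvc (eq_of_adj_of_dist_eq_dist_add_one hT hyv hcy.symm hv h)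

variable [T.LocallyFinite]

lemma degree_eq_one_of_forall_dist_le (hT : T.IsTree) (hv : v ≠ r)
    (h : ∀ u, T.dist r u ≤ T.dist r v) : T.degree v = 1 := by
  obtain ⟨p, hp, hdp⟩ := exists_adj_dist_eq_dist_add_one hT.connected hv
  refine degree_eq_one_iff_existsUnique_adj.2 ⟨p, hp, fun q hq => ?_⟩
  have hq_le := h q
  have hdq := (hT.dist_eq_dist_add_one_of_adj r hq).resolve_right (by omega)
  exact eq_of_adj_of_dist_eq_dist_add_one hT hq hp hdq hdp

lemma dist_le_of_degree_ne_one (hT : T.IsTree) {n : ℕ} (hr : ∀ u, T.dist r u ≤ n + 1)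
    (hv : T.degree v ≠ 1) : T.dist r v ≤ n := by
  by_contra! hn
  have hvr : v ≠ r := by
    rintro rfl
    simp only [dist_self, not_lt_zero] at hn
  exact hv (degree_eq_one_of_forall_dist_le hT hvr fun u => (hr u).trans hn)

lemma degree_eq_one_of_adj_of_adj (hT : T.IsTree) (hcc : T.Adj r c)
    (hr : ∀ u, T.dist r u ≤ 3) (hcy : T.Adj c y) (hyr : y ≠ r) (hyv : T.Adj y v) (hvc : v ≠ c) :
    T.degree v = 1 := by
  have hdc : T.dist r c = 1 := dist_eq_one_iff_adj.2 hcc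
  have hdy : T.dist r y = T.dist r c + 1 :=
    dist_eq_dist_add_one_of_adj_of_adj hT hcc hcy hyr (by rw [hdc, dist_self])
  have hdv : T.dist r v = T.dist r y + 1 := dist_eq_dist_add_one_of_adj_of_adj hT hcy hyv hvc hdy
  by_contra hv
  have hdv_le := dist_le_of_degree_ne_one hT hr hv
  omega

lemma isSupport_of_adj_of_degree_ne_one (hT : T.IsTree) (hrc : T.Adj r c) (hr : ∀ u, T.dist r u ≤ 3)
    (hcv : T.Adj c v) (hvr : v ≠ r) (hv : T.degree v ≠ 1) : IsSupport T v := by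
  obtain ⟨u, hu, huc⟩ : ∃ u, T.Adj v u ∧ u ≠ c := by
    by_contra! hcon
    exact hv (degree_eq_one_iff_existsUnique_adj.2 ⟨c, hcv.symm, hcon⟩)
  exact ⟨u, hu, degree_eq_one_of_adj_of_adj hT hrc hr hcv hvr hu huc⟩

lemma eq_or_adj_of_degree_ne_one (hT : T.IsTree) (hadj : T.Adj c₁ c₂)
    (hc₁ : ∀ u, T.dist c₁ u ≤ 3) (hc₂ : ∀ u, T.dist c₂ u ≤ 3) (hv : T.degree v ≠ 1) :
    (v = c₁ ∨ T.Adj c₁ v) ∨ (v = c₂ ∨ T.Adj c₂ v) := by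
  have hnear {c : V} (h : T.dist v c ≤ 1) : v = c ∨ T.Adj c v := by
    obtain h | h := Nat.le_one_iff_eq_zero_or_eq_one.1 h
    · exact .inl (hT.connected.dist_eq_zero_iff.1 h)
    · exact .inr (dist_eq_one_iff_adj.1 h).symm
  have hd₁ := dist_le_of_degree_ne_one hT hc₁ hv
  have hd₂ := dist_le_of_degree_ne_one hT hc₂ hv
  rw [dist_comm] at hd₁ hd₂
  obtain h | h := hT.dist_eq_dist_add_one_of_adj v hadj
  · exact .inr (hnear (by omega))
  · exact .inl (hnear (by omega))

lemma isSupport_of_degree_ne_one (hT : T.IsTree) (hadj : T.Adj c₁ c₂)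
    (hc₁ : ∀ u, T.dist c₁ u ≤ 3) (hc₂ : ∀ u, T.dist c₂ u ≤ 3) (hs₁ : IsSupport T c₁)
    (hv : T.degree v ≠ 1) (hvc₂ : v ≠ c₂) : IsSupport T v := by
  by_cases hvc₁ : v = c₁
  · exact hvc₁ ▸ hs₁
  obtain (h | h) | (h | h) := eq_or_adj_of_degree_ne_one hT hadj hc₁ hc₂ hv
  · exact absurd h hvc₁
  · exact isSupport_of_adj_of_degree_ne_one hT hadj.symm hc₂ h hvc₂ hv
  · exact absurd h hvc₂
  · exact isSupport_of_adj_of_degree_ne_one hT hadj hc₁ h hvc₁ hv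

lemma dist_le_max_of_degree_eq_one (hT : T.Connected) (hc : T.degree c = 1) {n : ℕ}
    (h : ∀ u, T.dist c u ≤ n + 1) (a b : V) : T.dist a b ≤ max (n + 1) (2 * n) := by
  obtain ⟨p, -, hp⟩ := degree_eq_one_iff_existsUnique_adj.1 hc
  have hdist {u : V} (hu : u ≠ c) : T.dist u p ≤ n := by
    obtain ⟨q, hq, hd⟩ := exists_adj_dist_eq_dist_add_one hT hu.symm
    have hu_le := h u
    rw [dist_comm] at hu_le
    rw [← hp q hq]
    omega
  by_cases ha : a = c
  · exact le_max_of_le_left (ha ▸ h b)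
  by_cases hb : b = c
  · exact le_max_of_le_left (dist_comm (G := T) ▸ hb ▸ h a)
  have htri := hT.dist_triangle (u := a) (v := p) (w := b)
  rw [dist_comm (u := p)] at htri
  exact le_max_of_le_right (by linarith [hdist ha, hdist hb])

/-- All neighbours of `y` other than `c` are pendant. -/
lemma IsWeakSupport.degree_eq_two_of_adj (hy : IsWeakSupport T y) (hT : T.IsTree)
    (hrc : T.Adj r c) (hr : ∀ u, T.dist r u ≤ 3) (hc : T.degree c ≠ 1) (hcy : T.Adj c y)
    (hyr : y ≠ r) : T.degree y = 2 := by
  have hinner : innerNeighbors T y = {c} := by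
    refine eq_singleton_iff_unique_mem.2 ⟨mem_innerNeighbors.2 ⟨hcy.symm, hc⟩, fun z hz => ?_⟩
    obtain ⟨hyz, hz⟩ := mem_innerNeighbors.1 hz
    exact by_contra fun hzc => hz (degree_eq_one_of_adj_of_adj hT hrc hr hcy hyr hyz hzc)
  rw [← hy.card_innerNeighbors_add_one, hinner, card_singleton]

lemma forall_isWeakSupport_degree_nsmul_ne_iff {Γ : Type*} [AddLeftCancelMonoid Γ] {g : Γ}
    (hg : g ≠ 0) (hT : T.IsTree) (hadj : T.Adj c₁ c₂)
    (hc₁ : ∀ u, T.dist c₁ u ≤ 3) (hc₂ : ∀ u, T.dist c₂ u ≤ 3) (hns₂ : ¬ IsSupport T c₂) :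
    (∀ v, IsWeakSupport T v → ¬ T.Adj c₂ v → T.degree v • g ≠ 2 • g) ↔
      ∀ y, T.Adj c₁ y → ¬ IsWeakSupport T y := by
  constructor
  · intro hweak y hy hws
    have hyc₂ : y ≠ c₂ := fun h => hns₂ (h ▸ hws.isSupport)
    have hny : ¬ T.Adj c₂ y := fun h => hT.dist_ne_of_adj c₂ hy <| by
      rw [dist_eq_one_iff_adj.2 h, dist_eq_one_iff_adj.2 hadj.symm]
    have hdeg₁ : T.degree c₁ ≠ 1 := fun h => hns₂ ⟨c₁, hadj.symm, h⟩
    exact hweak y hws hny (by rw [hws.degree_eq_two_of_adj hT hadj.symm hc₂ hdeg₁ hy hyc₂])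
  · intro hnot v hws hnv
    have hvc₁ : v ≠ c₁ := fun h => hnv (h ▸ hadj.symm)
    have hvc₂ : v ≠ c₂ := fun h => hns₂ (h ▸ hws.isSupport)
    have hdeg : T.degree v = 1 := by
      by_contra hv
      obtain (h | h) | (h | h) := eq_or_adj_of_degree_ne_one hT hadj hc₁ hc₂ hv
      · exact hvc₁ h
      · exact hnot v h hws
      · exact hvc₂ h
      · exact hnv h
    rw [hdeg, one_nsmul, two_nsmul]
    exact fun h => hg (left_eq_add.1 h)

end Tree

end VertexMagic

open VertexMagic

theorem stmt_19_general {V Γ : Type*} [AddCommGroup Γ] (T : SimpleGraph V) [T.LocallyFinite]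
    (hT : T.IsTree) (c₁ c₂ : V) (hadj : T.Adj c₁ c₂)
    (hc₁ : ∀ u : V, T.dist c₁ u ≤ 3) (hc₂ : ∀ u : V, T.dist c₂ u ≤ 3)
    (hs₁ : IsSupport T c₁) (hns₂ : ¬ IsSupport T c₂) (hdeg₂ : T.degree c₂ ≠ 1)
    (hΓ : T.degree c₂ + 1 < ENat.card Γ) :
    (∃ (ℓ : V → Γ) (μ : Γ), IsMagicLabeling T ℓ μ) ↔
      (∀ y : V, T.Adj c₁ y → ¬ IsWeakSupport T y) ∧
        ∃ g : Γ, g ≠ 0 ∧ ((T.degree c₂ : ℤ) - 1) • g = 0 := by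
  have hdeg : 1 < T.degree c₂ :=
    lt_of_le_of_ne ((T.degree_pos_iff_exists_adj c₂).2 ⟨c₁, hadj.symm⟩) hdeg₂.symm
  have hzsmul (g : Γ) : T.degree c₂ • g = g ↔ ((T.degree c₂ : ℤ) - 1) • g = 0 := by
    rw [sub_smul, one_smul, natCast_zsmul, sub_eq_zero]
  rw [exists_isMagicLabeling_iff hdeg hns₂
    (fun _ => isSupport_of_degree_ne_one hT hadj hc₁ hc₂ hs₁) hΓ, ← exists_and_left]
  refine exists_congr fun g => ?_
  rw [hzsmul, and_left_comm (b := g ≠ 0)]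
  refine and_congr_right fun hg => ?_
  rw [forall_isWeakSupport_degree_nsmul_ne_iff hg hT hadj hc₁ hc₂ hns₂, and_comm]

/-- Let `Γ` be an infinite abelian group which is not torsion-free
(it has a nonzero element of finite order) and `T` a finite tree of diameter 5 with
adjacent central vertices `vc₁`, `vc₂`, where `vc₁` is a support vertex and `vc₂` is
not. Then `T` is `Γ`-vertex magic iff (i) no vertex adjacent to `vc₁` is a weak
support vertex, and (ii) there is `g ≠ 0` with `((deg vc₂ : ℤ) - 1) • g = 0`. -/
theorem stmt_19 {V Γ : Type*} [Fintype V] [DecidableEq V]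
    [AddCommGroup Γ] [Infinite Γ]
    (hntf : ∃ g : Γ, g ≠ 0 ∧ IsOfFinAddOrder g)
    (T : SimpleGraph V) [DecidableRel T.Adj] (hT : T.IsTree)
    (hdiam : (∀ a b : V, T.dist a b ≤ 5) ∧ ∃ a b : V, T.dist a b = 5)
    (vc₁ vc₂ : V) (hadj : T.Adj vc₁ vc₂)
    (hc₁ : ∀ u : V, T.dist vc₁ u ≤ 3) (hc₂ : ∀ u : V, T.dist vc₂ u ≤ 3)
    (hs₁ : ∃ u : V, T.Adj vc₁ u ∧ T.degree u = 1)
    (hns₂ : ¬ ∃ u : V, T.Adj vc₂ u ∧ T.degree u = 1) :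
    (∃ (ℓ : V → Γ) (μ : Γ), (∀ w, ℓ w ≠ 0) ∧
        ∀ w, ∑ x ∈ T.neighborFinset w, ℓ x = μ) ↔
      ((∀ y : V, T.Adj vc₁ y → ¬ ∃! u : V, T.Adj y u ∧ T.degree u = 1) ∧
       (∃ g : Γ, g ≠ 0 ∧ ((T.degree vc₂ : ℤ) - 1) • g = 0)) := by
  have hdeg₂ : T.degree vc₂ ≠ 1 := fun h => by
    obtain ⟨a, b, hab⟩ := hdiam.2
    have hab_le := dist_le_max_of_degree_eq_one hT.connected h hc₂ a b
    omega
  exact stmt_19_general T hT vc₁ vc₂ hadj hc₁ hc₂ hs₁ hns₂ hdeg₂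
    (by rw [ENat.card_eq_top_of_infinite]; exact ENat.natCast_lt_top _)
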